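/- Let A = (a_{i,j}) be a symmetric positive-definite checkerboard matrix of size 2n+1 (n ≄ 1) satisfying a_{i,j} = (-1)^{(i-j)/2} a_{(i+j)/2,(i+j)/2} whenever i + j is even. Then the entry b_{1,2n+1} of A^{-1} is positive. -/

import Mathlib

/-!
Sorting the indices by parity (even ones first, counting from `0`) turns a checkerboard matrix into
a block diagonal matrix with blocks `E` (even) and `O` (odd), so the corner entry of `A⁻¹` is the
corner entry of `E⁻¹`. By Cramer's rule the latter is `(-1) ^ n * det E' / det E`, where `E'` is `E`
without its last row and first column. The relation between the entries of `A` says exactly that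
`E' = -O`, so the corner entry equals `det O / det E`, which has the sign of
`det A = det E * det O`.
-/

open Matrix

variable {R K : Type*} {m n : ℕ}

/-- A checkerboard matrix: its entries vanish at all positions `(i, j)` with `i + j` odd. Counting
indices from `0` or from `1` makes no difference. -/
def IsCheckerboard [Zero R] (A : Matrix (Fin m) (Fin m) R) : Prop :=
  ∀ i j : Fin m, Odd ((i : ℕ) + (j : ℕ)) → A i j = 0

/-- The entries at positions `(i, j)` with `i + j` even are determined by the diagonal entry at the
midpoint of `i` and `j`, up to the sign `(-1) ^ ((i - j) / 2)`. The difference `i - j` is taken in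
`ℤ`, where the division by `2` is exact. -/
def IsAlternatingMidpoint [DivisionRing K] (A : Matrix (Fin m) (Fin m) K) : Prop :=
  ∀ i j : Fin m, Even ((i : ℕ) + (j : ℕ)) →
    A i j = (-1) ^ (((i : ℤ) - (j : ℤ)) / 2) *
      A ⟨((i : ℕ) + (j : ℕ)) / 2, by omega⟩ ⟨((i : ℕ) + (j : ℕ)) / 2, by omega⟩

/-- The bijection listing the even elements of `Fin (2 * n + 1)` on the left and the odd ones on
the right, used to bring checkerboard matrices into block diagonal form. -/
noncomputable def finParityEquiv (n : ℕ) : Fin (n + 1) ⊕ Fin n ≃ Fin (2 * n + 1) :=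
  Equiv.ofBijective
    (Sum.elim (fun k => ⟨2 * k, by omega⟩) (fun k => ⟨2 * k + 1, by omega⟩)) <| by
      rw [Fintype.bijective_iff_injective_and_card]
      refine ⟨?_, by simp only [Fintype.card_sum, Fintype.card_fin]; omega⟩
      rintro (k | k) (l | l) h <;>
        simp only [Sum.elim_inl, Sum.elim_inr, Sum.inl.injEq, Sum.inr.injEq, Fin.ext_iff] at h ⊢ <;>
        omega

@[simp]
lemma finParityEquiv_inl_val (k : Fin (n + 1)) :
    (finParityEquiv n (Sum.inl k) : ℕ) = 2 * k := rfl

@[simp]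
lemma finParityEquiv_inr_val (k : Fin n) :
    (finParityEquiv n (Sum.inr k) : ℕ) = 2 * k + 1 := rfl

/-- The submatrix on the rows and columns of even index, counting from `0`. -/
noncomputable def evenBlock (A : Matrix (Fin (2 * n + 1)) (Fin (2 * n + 1)) R) :
    Matrix (Fin (n + 1)) (Fin (n + 1)) R :=
  (A.submatrix (finParityEquiv n) (finParityEquiv n)).toBlocks₁₁

/-- The submatrix on the rows and columns of odd index, counting from `0`. -/
noncomputable def oddBlock (A : Matrix (Fin (2 * n + 1)) (Fin (2 * n + 1)) R) :
    Matrix (Fin n) (Fin n) R :=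
  (A.submatrix (finParityEquiv n) (finParityEquiv n)).toBlocks₂₂

lemma IsCheckerboard.submatrix_finParityEquiv [Zero R]
    {A : Matrix (Fin (2 * n + 1)) (Fin (2 * n + 1)) R} (hA : IsCheckerboard A) :
    A.submatrix (finParityEquiv n) (finParityEquiv n) =
      fromBlocks (evenBlock A) 0 0 (oddBlock A) := by
  ext (i | i) (j | j)
  · rfl
  · exact hA _ _ (by simp [parity_simps])
  · exact hA _ _ (by simp [parity_simps])
  · rfl

lemma IsCheckerboard.det_eq_evenBlock_mul_oddBlock [CommRing R]
    {A : Matrix (Fin (2 * n + 1)) (Fin (2 * n + 1)) R} (hA : IsCheckerboard A) :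
    A.det = (evenBlock A).det * (oddBlock A).det := by
  rw [← det_submatrix_equiv_self (finParityEquiv n), hA.submatrix_finParityEquiv,
    det_fromBlocks_zero₂₁]

lemma IsCheckerboard.evenBlock_inv [CommRing R]
    {A : Matrix (Fin (2 * n + 1)) (Fin (2 * n + 1)) R} (hA : IsCheckerboard A)
    (hdet : IsUnit A.det) :
    evenBlock A⁻¹ = (evenBlock A)⁻¹ := by
  rw [hA.det_eq_evenBlock_mul_oddBlock, IsUnit.mul_iff] at hdet
  have hunits : IsUnit (evenBlock A) ↔ IsUnit (oddBlock A) := by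
    simp only [isUnit_iff_isUnit_det, hdet]
  rw [evenBlock, ← inv_submatrix_equiv, hA.submatrix_finParityEquiv,
    inv_fromBlocks_zero₂₁_of_isUnit_iff _ _ _ hunits, toBlocks_fromBlocks₁₁]

lemma adjugate_zero_last [CommRing R] (E : Matrix (Fin (n + 1)) (Fin (n + 1)) R) :
    E.adjugate 0 (Fin.last n) = (-1) ^ n * (E.submatrix Fin.castSucc Fin.succ).det := by
  simp [adjugate_fin_succ_eq_det_submatrix]

lemma IsAlternatingMidpoint.apply_eq [DivisionRing K] {A : Matrix (Fin m) (Fin m) K}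
    (hA : IsAlternatingMidpoint A) {i j c : Fin m} {d : ℤ} (hc : (i : ℕ) + (j : ℕ) = 2 * c)
    (hd : (i : ℤ) - (j : ℤ) = 2 * d) : A i j = (-1) ^ d * A c c := by
  have hmid : ((i : ℕ) + (j : ℕ)) / 2 = c := by omega
  have hexp : ((i : ℤ) - (j : ℤ)) / 2 = d := by omega
  rw [hA i j (hc ▸ even_two_mul _), hexp]
  simp only [hmid, Fin.eta]

lemma IsAlternatingMidpoint.evenBlock_submatrix [DivisionRing K]
    {A : Matrix (Fin (2 * n + 1)) (Fin (2 * n + 1)) K} (hA : IsAlternatingMidpoint A) :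
    (evenBlock A).submatrix Fin.castSucc Fin.succ = -oddBlock A := by
  ext k l
  let c : Fin (2 * n + 1) := ⟨k + l + 1, by omega⟩
  have heven : (evenBlock A).submatrix Fin.castSucc Fin.succ k l =
      (-1) ^ ((k : ℤ) - l - 1) * A c c := by
    apply hA.apply_eq <;>
      simp only [finParityEquiv_inl_val, Fin.val_castSucc, Fin.val_succ, c] <;> omega
  have hodd : oddBlock A k l = (-1) ^ ((k : ℤ) - l) * A c c := by
    apply hA.apply_eq <;> simp only [finParityEquiv_inr_val, c] <;> omega
  rw [heven, Matrix.neg_apply, hodd, zpow_sub_one₀ (by simp), inv_neg_one, mul_neg_one, neg_mul]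

lemma inv_corner_entry_eq_div [Field K] {A : Matrix (Fin (2 * n + 1)) (Fin (2 * n + 1)) K}
    (hcheck : IsCheckerboard A) (hmid : IsAlternatingMidpoint A) (hdet : A.det ≠ 0) :
    A⁻¹ 0 (Fin.last (2 * n)) = (oddBlock A).det / (evenBlock A).det :=
  calc
    A⁻¹ 0 (Fin.last (2 * n)) = evenBlock A⁻¹ 0 (Fin.last n) := rfl
    _ = (evenBlock A)⁻¹ 0 (Fin.last n) := by rw [hcheck.evenBlock_inv hdet.isUnit]
    _ = (evenBlock A).adjugate 0 (Fin.last n) / (evenBlock A).det := by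
      rw [inv_def, Matrix.smul_apply, Ring.inverse_eq_inv', smul_eq_mul, inv_mul_eq_div]
    _ = (-1) ^ n * (-oddBlock A).det / (evenBlock A).det := by
      rw [adjugate_zero_last, hmid.evenBlock_submatrix]
    _ = (oddBlock A).det / (evenBlock A).det := by
      rw [det_neg, Fintype.card_fin, ← mul_assoc, ← mul_pow, neg_one_mul, neg_neg, one_pow, one_mul]

theorem inv_corner_entry_pos_general [Field K] [LinearOrder K] [IsStrictOrderedRing K]
    {A : Matrix (Fin (2 * n + 1)) (Fin (2 * n + 1)) K}
    (hdet : 0 < A.det) (hcheck : IsCheckerboard A) (hmid : IsAlternatingMidpoint A) :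
    0 < A⁻¹ 0 (Fin.last (2 * n)) := by
  rwa [inv_corner_entry_eq_div hcheck hmid hdet.ne', div_pos_iff, ← mul_pos_iff, mul_comm,
    ← hcheck.det_eq_evenBlock_mul_oddBlock]

theorem inv_corner_entry_pos (n : ℕ) (hn : 1 ≤ n)
    (A : Matrix (Fin (2*n+1)) (Fin (2*n+1)) ℝ)
    (hpd : A.PosDef)
    (hcheck : ∀ i j : Fin (2*n+1), Odd ((i : ℕ) + (j : ℕ)) → A i j = 0)
    (hstruct : ∀ i j : Fin (2*n+1), Even ((i : ℕ) + (j : ℕ)) →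
      A i j = (-1 : ℝ) ^ ((((i : ℕ) : ℤ) - ((j : ℕ) : ℤ)) / 2) *
        A ⟨((i : ℕ) + (j : ℕ)) / 2, by have := i.isLt; have := j.isLt; omega⟩
          ⟨((i : ℕ) + (j : ℕ)) / 2, by have := i.isLt; have := j.isLt; omega⟩) :
    0 < A⁻¹ (0 : Fin (2*n+1)) (Fin.last (2*n)) :=
  inv_corner_entry_pos_general hpd.det_pos hcheck hstruct
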